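/- Let I be a unique games instance with |V| = n vertices and optimal value z*, and let H = EuclideanSpace ℝ (Fin ((k+1)·n)). Then the supremum, over all feasible vector assignments v, of the relaxation objective z₁(v) is at least z*; that is, z₁* ≥ z*. -/

import Mathlib

open RealInnerProductSpace

/-!
A labeling is encoded on the line through a single unit vector `u`: the auxiliary vectors and the
vectors of the chosen labels are `u`, all other vectors are `-u`. This is feasible, since the signs
at a vertex add up to `1 - (k - 1) = 2 - k`. For label vectors `s • u` at `i` and `t • u` at `j`,
the objective has the summand `1 + s + t + s * t = (1 + s) * (1 + t)`, which is `4` if both labels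
are chosen and `0` otherwise. So an edge contributes its weight precisely when the labeling
satisfies it, and the relaxation attains every value of a labeling.
-/

section LabelSign

variable {L : Type*} [DecidableEq L]

/-- The `±1` encoding of the label `a`: the sign attached to the label `r` is `1` if `r` is the
chosen label and `-1` otherwise. -/
def labelSign (a r : L) : ℝ := if r = a then 1 else -1

lemma abs_labelSign (a r : L) : |labelSign a r| = 1 := by
  unfold labelSign; split_ifs <;> simp

lemma one_add_labelSign (a r : L) : 1 + labelSign a r = if r = a then 2 else 0 := by
  unfold labelSign; split_ifs <;> norm_num

lemma sum_labelSign [Fintype L] (a : L) : ∑ r, labelSign a r = 2 - Fintype.card L := by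
  have h : ∑ r, (1 + labelSign a r) = 2 := by simp [one_add_labelSign]
  rw [Finset.sum_add_distrib, Finset.sum_const, Finset.card_univ, nsmul_one] at h
  linarith

lemma sum_one_add_labelSign_mul_one_add_labelSign [Fintype L] {M : Type*} [DecidableEq M]
    (π : L → M) (a : L) (b : M) :
    ∑ r, (1 + labelSign a r) * (1 + labelSign b (π r)) = if b = π a then 4 else 0 := by
  simp only [one_add_labelSign, ite_mul, zero_mul, Finset.sum_ite_eq', Finset.mem_univ,
    if_true, eq_comm (a := b)]
  split_ifs <;> norm_num

end LabelSign

section Relaxation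

variable {V H : Type*} [NormedAddCommGroup H] [InnerProductSpace ℝ H] {k : ℕ}

/-- The value `z(ℓ)` of a labeling, the total weight of the edges it satisfies. The constraints `σ`
may be arbitrary maps, as in a projection game; in a unique game they are permutations. -/
def labelingValue (E : Finset (V × V)) (w : V × V → ℝ) (σ : V × V → Fin k → Fin k)
    (ℓ : V → Fin k) : ℝ :=
  ∑ e ∈ E, if ℓ e.2 = σ e (ℓ e.1) then w e else 0

/-- The feasible set of the vector relaxation. At each vertex, index `0` carries the auxiliary
vector and index `r.succ` the vector of the label `r`. -/
def feasibleAssignments (V H : Type*) [NormedAddCommGroup H] [InnerProductSpace ℝ H] (k : ℕ) :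
    Set (V → Fin (k + 1) → H) :=
  {v | (∀ i r, ‖v i r‖ = 1) ∧ ∀ i, ∑ r : Fin k, ⟪v i 0, v i r.succ⟫ ≤ 2 - k}

/-- The objective `z₁(v)` of the vector relaxation. -/
noncomputable def relaxationObjective (E : Finset (V × V)) (w : V × V → ℝ)
    (σ : V × V → Fin k → Fin k) (v : V → Fin (k + 1) → H) : ℝ :=
  (1 / 4) * ∑ e ∈ E, ∑ r : Fin k, w e *
    (⟪v e.1 0, v e.1 0⟫ + ⟪v e.1 0, v e.1 r.succ⟫ +
      ⟪v e.2 0, v e.2 (σ e r).succ⟫ + ⟪v e.1 r.succ, v e.2 (σ e r).succ⟫)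

/-- The vector assignment that encodes a labeling by multiples `± u` of one vector. -/
def labelingAssignment (u : H) (ℓ : V → Fin k) (i : V) : Fin (k + 1) → H :=
  Fin.cons u fun r => labelSign (ℓ i) r • u

@[simp]
lemma labelingAssignment_zero (u : H) (ℓ : V → Fin k) (i : V) : labelingAssignment u ℓ i 0 = u :=
  rfl

@[simp]
lemma labelingAssignment_succ (u : H) (ℓ : V → Fin k) (i : V) (r : Fin k) :
    labelingAssignment u ℓ i r.succ = labelSign (ℓ i) r • u :=
  rfl

lemma labelingAssignment_mem_feasibleAssignments {u : H} (hu : ‖u‖ = 1) (ℓ : V → Fin k) :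
    labelingAssignment u ℓ ∈ feasibleAssignments V H k := by
  refine ⟨fun i => Fin.forall_fin_succ.2 ⟨hu, fun r => ?_⟩, fun i => le_of_eq ?_⟩
  · simp [norm_smul, abs_labelSign, hu]
  · simp [real_inner_smul_right, hu, sum_labelSign]

lemma relaxationObjective_labelingAssignment (E : Finset (V × V)) (w : V × V → ℝ)
    (σ : V × V → Fin k → Fin k) {u : H} (hu : ‖u‖ = 1) (ℓ : V → Fin k) :
    relaxationObjective E w σ (labelingAssignment u ℓ) = labelingValue E w σ ℓ := by
  have huu : ⟪u, u⟫ = 1 := by simp [hu]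
  have factor (s t : ℝ) :
      ⟪u, u⟫ + ⟪u, s • u⟫ + ⟪u, t • u⟫ + ⟪s • u, t • u⟫ = (1 + s) * (1 + t) := by
    simp only [real_inner_smul_left, real_inner_smul_right, huu]
    ring
  simp only [relaxationObjective, labelingValue, labelingAssignment_zero, labelingAssignment_succ,
    factor, ← Finset.mul_sum, sum_one_add_labelSign_mul_one_add_labelSign]
  rw [Finset.mul_sum]
  refine Finset.sum_congr rfl fun e _ => ?_
  split_ifs <;> ring

lemma range_labelingValue_subset_image_relaxationObjective (hH : Nonempty V → Nontrivial H)
    (E : Finset (V × V)) (w : V × V → ℝ) (σ : V × V → Fin k → Fin k) :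
    Set.range (labelingValue E w σ) ⊆ relaxationObjective E w σ '' feasibleAssignments V H k := by
  rintro _ ⟨ℓ, rfl⟩
  cases isEmpty_or_nonempty V with
  | inl _ =>
    refine ⟨isEmptyElim, ⟨isEmptyElim, isEmptyElim⟩, ?_⟩
    simp [relaxationObjective, labelingValue, E.eq_empty_of_isEmpty]
  | inr hV =>
    have := hH hV
    obtain ⟨u, hu⟩ := exists_norm_eq H zero_le_one
    exact ⟨labelingAssignment u ℓ, labelingAssignment_mem_feasibleAssignments hu ℓ,
      relaxationObjective_labelingAssignment E w σ hu ℓ⟩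

theorem stmt_13_general (hH : Nonempty V → Nontrivial H) (E : Finset (V × V)) (w : V × V → ℝ)
    (σ : V × V → Fin k → Fin k) {zstar z₁star : ℝ}
    (hzstar : IsLUB (Set.range (labelingValue E w σ)) zstar)
    (hz₁star : IsLUB (relaxationObjective E w σ '' feasibleAssignments V H k) z₁star) :
    zstar ≤ z₁star :=
  hzstar.mono hz₁star (range_labelingValue_subset_image_relaxationObjective hH E w σ)

end Relaxation

/-- the supremum z₁* of the SDP relaxation objective over
feasible vector assignments is at least the optimal value z*. -/
theorem stmt_13 {V : Type*} [Fintype V] [DecidableEq V] {k : ℕ} (hk : 2 ≤ k)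
    (E : Finset (V × V)) (w : V × V → ℝ) (hw : ∀ e ∈ E, 0 < w e)
    (σ : V × V → Equiv.Perm (Fin k))
    (z : (V → Fin k) → ℝ)
    (hz : ∀ ℓ, z ℓ = ∑ e ∈ E, if ℓ e.2 = σ e (ℓ e.1) then w e else 0)
    (zstar : ℝ) (hzstar : IsGreatest (Set.range z) zstar)
    (n : ℕ) (hn : n = Fintype.card V)
    (z₁ : (V → Fin (k + 1) → EuclideanSpace ℝ (Fin ((k + 1) * n))) → ℝ)
    (hz₁ : ∀ v, z₁ v = (1 / 4) * ∑ e ∈ E, ∑ r : Fin k, w e *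
        (⟪v e.1 0, v e.1 0⟫ + ⟪v e.1 0, v e.1 r.succ⟫ +
          ⟪v e.2 0, v e.2 (σ e r).succ⟫ + ⟪v e.1 r.succ, v e.2 (σ e r).succ⟫))
    (z₁star : ℝ)
    (hz₁star : IsLUB {x : ℝ |
      ∃ v : V → Fin (k + 1) → EuclideanSpace ℝ (Fin ((k + 1) * n)),
        (∀ i r, ‖v i r‖ = 1) ∧
        (∀ i, ∑ r : Fin k, ⟪v i 0, v i r.succ⟫ ≤ 2 - k) ∧
        z₁ v = x} z₁star) :
    z₁star ≥ zstar := by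
  obtain rfl : z = labelingValue E w (σ ·) := funext hz
  obtain rfl : z₁ = relaxationObjective E w (σ ·) := funext hz₁
  have nontrivial_of_nonempty (_ : Nonempty V) :
      Nontrivial (EuclideanSpace ℝ (Fin ((k + 1) * n))) :=
    have : NeZero ((k + 1) * n) := ⟨mul_ne_zero k.succ_ne_zero (hn ▸ Fintype.card_ne_zero)⟩
    inferInstance
  refine stmt_13_general nontrivial_of_nonempty E w (σ ·) hzstar.isLUB ?_
  simpa only [Set.image, feasibleAssignments, Set.mem_ofPred_eq, and_assoc] using hz₁star
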